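/- arXiv:2502.06169 — 2 statements merged into one kernel-verified Lean document; each statement's English description precedes it below -/
import Mathlib

section
/- Let A = (a_ij) be a 3×3 generalized Cartan matrix whose principal submatrix A₁₂ is of infinite type, i.e. a₁₂·a₂₁ ≥ 4, and set κ = a₁₂ω₁² + a₁₂a₂₁ω₁ω₂ + a₂₁ω₂² + a₁₂a₃₁ω₁ω₃ + a₂₁a₃₂ω₂ω₃ ∈ ℚ[ω₁,ω₂,ω₃]. Then the subalgebra P₁₂ of polynomials fixed by both σ₁ and σ₂ equals the ℚ-subalgebra of ℚ[ω₁,ω₂,ω₃] generated by κ and ω₃. -/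
open MvPolynomial

/-- `A` is a (generalized) Cartan matrix. -/
def IsGCM {n : ℕ} (A : Matrix (Fin n) (Fin n) ℤ) : Prop :=
  (∀ i, A i i = 2) ∧ (∀ i j, i ≠ j → A i j ≤ 0) ∧
    (∀ i j, i ≠ j → (A i j = 0 ↔ A j i = 0))

/-- The simple root `α_j = a₁ⱼω₁ + a₂ⱼω₂ + a₃ⱼω₃` viewed in `F[ω₁,ω₂,ω₃]`. -/
noncomputable def cartanAlpha (A : Matrix (Fin 3) (Fin 3) ℤ) (F : Type*) [Field F]
    (j : Fin 3) : MvPolynomial (Fin 3) F :=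
  ∑ i : Fin 3, (C ((A i j : ℤ) : F)) * X i

/-- The simple reflection `σ_j`. -/
noncomputable def cartanSigma (A : Matrix (Fin 3) (Fin 3) ℤ) (F : Type*) [Field F]
    (j : Fin 3) : MvPolynomial (Fin 3) F →ₐ[F] MvPolynomial (Fin 3) F :=
  aeval (fun i => if i = j then X j - cartanAlpha A F j else X i)

/-- The quadratic polynomial
`κ = a₁₂ω₁² + a₁₂a₂₁ω₁ω₂ + a₂₁ω₂² + a₁₂a₃₁ω₁ω₃ + a₂₁a₃₂ω₂ω₃`. -/
noncomputable def kappa (A : Matrix (Fin 3) (Fin 3) ℤ) : MvPolynomial (Fin 3) ℚ :=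
  C ((A 0 1 : ℤ) : ℚ) * X 0 ^ 2 + C (((A 0 1 * A 1 0 : ℤ)) : ℚ) * X 0 * X 1 +
    C ((A 1 0 : ℤ) : ℚ) * X 1 ^ 2 + C (((A 0 1 * A 2 0 : ℤ)) : ℚ) * X 0 * X 2 +
    C (((A 1 0 * A 2 1 : ℤ)) : ℚ) * X 1 * X 2

/-!
Modulo `ω₁` the ring is spanned over `S = F[κ, ω₃]` by `1` and `ω₂`, because there
`κ ≡ a₂₁ω₂² + a₂₁a₃₂ω₂ω₃`. Averaging over `σ₂` therefore writes an invariant `f` as an element of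
`S` plus an invariant divisible by `ω₁`. The latter is divisible by the whole orbit of `ω₁` under
`φ = σ₁σ₂`. On linear forms modulo `ω₃`, `φ` has determinant `1` and trace `a₁₂a₂₁ - 2`, so the
`ω₂`-coefficient of `φⁿω₁` is a nonzero multiple of a Chebyshev value `Sₙ₋₁(a₁₂a₂₁ - 2)`, which
does not vanish because `|a₁₂a₂₁ - 2| ≥ 2`. The orbit is thus infinite up to associates, and only
`0` has that many divisors.
-/

lemma iterate_dvd_iterate_iff {E M : Type*} [Semigroup M] [EquivLike E M M] [MulEquivClass E M M]
    (φ : E) (n : ℕ) {x y : M} : φ^[n] x ∣ φ^[n] y ↔ x ∣ y := by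
  induction n with
  | zero => rfl
  | succ n ih => rw [Function.iterate_succ_apply', Function.iterate_succ_apply', map_dvd_iff, ih]

lemma eq_zero_of_dvd_of_forall_not_dvd_iterate {E M : Type*} [CommMonoidWithZero M]
    [UniqueFactorizationMonoid M] [EquivLike E M M] [MulEquivClass E M M] {φ : E} {x f : M}
    (hf : φ f = f) (hxf : x ∣ f) (hx : ∀ n, ¬ x ∣ φ^[n + 1] x) : f = 0 := by
  by_contra hf0
  have orbit_dvd (n : ℕ) : Associates.mk (φ^[n] x) ∣ Associates.mk f := by
    rwa [Associates.mk_dvd_mk, ← Function.iterate_fixed hf n, iterate_dvd_iterate_iff]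
  let orbit (n : ℕ) : {d : Associates M // d ∣ Associates.mk f} := ⟨_, orbit_dvd n⟩
  have : Finite {d : Associates M // d ∣ Associates.mk f} :=
    Fintype.finite
      (UniqueFactorizationMonoid.fintypeSubtypeDvd _ (Associates.mk_ne_zero.mpr hf0))
  refine not_injective_infinite_finite orbit (.of_lt_imp_ne fun m n hmn heq ↦ ?_)
  obtain ⟨k, rfl⟩ := Nat.exists_eq_add_of_lt hmn
  have hdvd : φ^[m] x ∣ φ^[m + k + 1] x :=
    (Associates.mk_eq_mk_iff_associated.mp (Subtype.ext_iff.mp heq)).dvd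
  rw [add_assoc, Function.iterate_add_apply, iterate_dvd_iterate_iff] at hdvd
  exact hx k hdvd

section Chebyshev

open Polynomial.Chebyshev

variable {R : Type*} [CommRing R] [LinearOrder R] [IsStrictOrderedRing R] {t : R}

lemma abs_chebyshevS_eval_lt_succ (ht : 2 ≤ |t|) (n : ℕ) :
    |(S R n).eval t| < |(S R (n + 1)).eval t| := by
  induction n with
  | zero => simpa using one_lt_two.trans_le ht
  | succ n ih =>
    have hrec : (S R (n + 2)).eval t = t * (S R (n + 1)).eval t - (S R n).eval t := by
      simp [S_add_two]
    rw [Nat.cast_add_one, add_assoc, one_add_one_eq_two, hrec]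
    calc |(S R (n + 1)).eval t|
        < 2 * |(S R (n + 1)).eval t| - |(S R n).eval t| := by linarith
      _ ≤ |t * (S R (n + 1)).eval t| - |(S R n).eval t| := by rw [abs_mul]; gcongr
      _ ≤ |t * (S R (n + 1)).eval t - (S R n).eval t| := abs_sub_abs_le_abs_sub _ _

lemma chebyshevS_eval_ne_zero (ht : 2 ≤ |t|) (n : ℕ) : (S R n).eval t ≠ 0 := by
  cases n with
  | zero => simp
  | succ n =>
    exact_mod_cast abs_pos.mp ((abs_nonneg _).trans_lt (abs_chebyshevS_eval_lt_succ ht n))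

end Chebyshev

section Reflections

variable {A : Matrix (Fin 3) (Fin 3) ℤ} {F : Type*} [Field F] {j : Fin 3}

lemma cartanSigma_X (i : Fin 3) :
    cartanSigma A F j (X i) = X i - if i = j then cartanAlpha A F j else 0 := by
  rw [cartanSigma, aeval_X]
  split_ifs with h
  · rw [h]
  · rw [sub_zero]

lemma cartanSigma_X_of_ne {i : Fin 3} (h : i ≠ j) : cartanSigma A F j (X i) = X i := by
  rw [cartanSigma_X, if_neg h, sub_zero]

lemma cartanSigma_C (c : F) : cartanSigma A F j (C c) = C c :=
  (cartanSigma A F j).commutes c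

lemma cartanSigma_cartanAlpha (hj : A j j = 2) :
    cartanSigma A F j (cartanAlpha A F j) = -cartanAlpha A F j := by
  have hsum : cartanSigma A F j (cartanAlpha A F j) =
      cartanAlpha A F j - C ((A j j : ℤ) : F) * cartanAlpha A F j := by
    conv_lhs => rw [cartanAlpha]
    simp only [map_sum, map_mul, cartanSigma_C, cartanSigma_X, mul_sub, mul_ite, mul_zero,
      Finset.sum_sub_distrib, Finset.sum_ite_eq', Finset.mem_univ, if_true]
    rw [← cartanAlpha]
  rw [hsum, hj, Int.cast_ofNat, map_ofNat]
  ring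

lemma cartanSigma_comp_self (hj : A j j = 2) :
    (cartanSigma A F j).comp (cartanSigma A F j) = AlgHom.id F _ := by
  ext1 i
  rw [AlgHom.comp_apply, AlgHom.id_apply, cartanSigma_X]
  split_ifs with h
  · rw [map_sub, cartanSigma_cartanAlpha hj, cartanSigma_X, if_pos h]
    ring
  · rw [sub_zero, cartanSigma_X_of_ne h]

lemma cartanSigma_cartanSigma (hj : A j j = 2) (f : MvPolynomial (Fin 3) F) :
    cartanSigma A F j (cartanSigma A F j f) = f :=
  DFunLike.congr_fun (cartanSigma_comp_self hj) f

lemma cartanSigma_zero_X_zero (h₀ : A 0 0 = 2) :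
    cartanSigma A F 0 (X 0) = -X 0 - C (A 1 0 : F) * X 1 - C (A 2 0 : F) * X 2 := by
  rw [cartanSigma_X, if_pos rfl, cartanAlpha, Fin.sum_univ_three, h₀, Int.cast_ofNat, map_ofNat]
  ring

lemma cartanSigma_one_X_one (h₁ : A 1 1 = 2) :
    cartanSigma A F 1 (X 1) = -X 1 - C (A 0 1 : F) * X 0 - C (A 2 1 : F) * X 2 := by
  rw [cartanSigma_X, if_pos rfl, cartanAlpha, Fin.sum_univ_three, h₁, Int.cast_ofNat, map_ofNat]
  ring

/-- The reflection `σ_j` as an automorphism of the polynomial ring, available when `a_jj = 2`. -/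
noncomputable def cartanSigmaEquiv (F : Type*) [Field F] (hj : A j j = 2) :
    MvPolynomial (Fin 3) F ≃ₐ[F] MvPolynomial (Fin 3) F :=
  AlgEquiv.ofAlgHom (cartanSigma A F j) (cartanSigma A F j)
    (cartanSigma_comp_self hj) (cartanSigma_comp_self hj)

/-- The Coxeter element `σ₁σ₂` of the rank two Weyl group generated by `σ₁` and `σ₂`; it applies
`σ₂` first. The indices `1, 2` are `0, 1` in `Fin 3`. -/
noncomputable def coxeterElement (F : Type*) [Field F] (h₀ : A 0 0 = 2) (h₁ : A 1 1 = 2) :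
    MvPolynomial (Fin 3) F ≃ₐ[F] MvPolynomial (Fin 3) F :=
  (cartanSigmaEquiv F h₁).trans (cartanSigmaEquiv F h₀)

variable {h₀ : A 0 0 = 2} {h₁ : A 1 1 = 2}

lemma coxeterElement_apply (f : MvPolynomial (Fin 3) F) :
    coxeterElement F h₀ h₁ f = cartanSigma A F 0 (cartanSigma A F 1 f) := rfl

lemma coxeterElement_X_zero :
    coxeterElement F h₀ h₁ (X 0) = -X 0 - C (A 1 0 : F) * X 1 - C (A 2 0 : F) * X 2 := by
  rw [coxeterElement_apply, cartanSigma_X_of_ne (by decide), cartanSigma_zero_X_zero h₀]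

lemma coxeterElement_X_two : coxeterElement F h₀ h₁ (X 2) = X 2 := by
  rw [coxeterElement_apply, cartanSigma_X_of_ne (by decide), cartanSigma_X_of_ne (by decide)]

lemma coxeterElement_coxeterElement_X_zero :
    coxeterElement F h₀ h₁ (coxeterElement F h₀ h₁ (X 0)) =
      C (A 0 1 * A 1 0 - 2 : F) * coxeterElement F h₀ h₁ (X 0) - X 0 +
        C (A 1 0 * A 2 1 - 2 * A 2 0 : F) * X 2 := by
  simp (disch := decide) only [coxeterElement_apply, map_sub, map_neg, map_mul, map_ofNat,
    cartanSigma_C, cartanSigma_X_of_ne, cartanSigma_zero_X_zero h₀, cartanSigma_one_X_one h₁]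
  ring

lemma iterate_coxeterElement_X_zero (n : ℕ) :
    (coxeterElement F h₀ h₁)^[n + 2] (X 0) =
      C (A 0 1 * A 1 0 - 2 : F) * (coxeterElement F h₀ h₁)^[n + 1] (X 0) -
        (coxeterElement F h₀ h₁)^[n] (X 0) + C (A 1 0 * A 2 1 - 2 * A 2 0 : F) * X 2 := by
  have fix_C (c : F) : (coxeterElement F h₀ h₁)^[n] (C c) = C c :=
    Function.iterate_fixed ((coxeterElement F h₀ h₁).commutes c) n
  have fix_X : (coxeterElement F h₀ h₁)^[n] (X 2) = X 2 :=
    Function.iterate_fixed coxeterElement_X_two n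
  simp only [Function.iterate_succ_apply, coxeterElement_coxeterElement_X_zero, iterate_map_add,
    iterate_map_sub, iterate_map_mul, fix_C, fix_X]

lemma coeff_iterate_coxeterElement_X_zero (n : ℕ) :
    coeff (Finsupp.single 1 1) ((coxeterElement F h₀ h₁)^[n] (X 0)) =
      -(A 1 0 : F) *
        ((Polynomial.Chebyshev.S ℤ (n - 1)).eval (A 0 1 * A 1 0 - 2) : ℤ) := by
  induction n using Nat.twoStepInduction with
  | zero => simp [coeff_X, Finsupp.single_left_inj]
  | one =>
    rw [Function.iterate_one, coxeterElement_X_zero, coeff_sub, coeff_sub, coeff_neg, coeff_C_mul,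
      coeff_C_mul]
    simp [coeff_X, Finsupp.single_left_inj]
  | more n ih₀ ih₁ =>
    have hS := Polynomial.Chebyshev.S_add_two ℤ (n - 1)
    rw [iterate_coxeterElement_X_zero, coeff_add, coeff_sub, coeff_C_mul, coeff_C_mul, ih₀, ih₁]
    rw [show ((n + 2 : ℕ) : ℤ) - 1 = n - 1 + 2 by push_cast; ring,
      show ((n + 1 : ℕ) : ℤ) - 1 = n - 1 + 1 by push_cast; ring, hS]
    simp only [sub_add_cancel, coeff_X, ne_eq, one_ne_zero, not_false_eq_true,
      Finsupp.single_left_inj, Fin.reduceEq, ↓reduceIte, mul_zero, add_zero, Polynomial.eval_sub,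
      Polynomial.eval_mul, Polynomial.eval_X, Int.cast_sub, Int.cast_mul, Int.cast_ofNat]
    ring

lemma not_X_zero_dvd_iterate_coxeterElement_X_zero [CharZero F]
    (hA : A 0 1 * A 1 0 ∉ Set.Icc 0 3) (n : ℕ) :
    ¬ X 0 ∣ (coxeterElement F h₀ h₁)^[n + 1] (X 0) := by
  rintro ⟨g, hg⟩
  have hcoeff := coeff_iterate_coxeterElement_X_zero (F := F) (h₀ := h₀) (h₁ := h₁) (n + 1)
  have htrace : 2 ≤ |A 0 1 * A 1 0 - 2| := by
    rw [Set.mem_Icc] at hA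
    grind
  have h10 : A 1 0 ≠ 0 := fun h ↦ hA (by simp [h])
  rw [hg, coeff_X_mul', if_neg (by simp), Nat.cast_add_one, add_sub_cancel_right] at hcoeff
  refine mul_ne_zero ?_ ?_ hcoeff.symm
  · exact_mod_cast neg_ne_zero.mpr h10
  · exact_mod_cast chebyshevS_eval_ne_zero htrace n

lemma eq_zero_of_cartanSigma_eq_of_X_zero_dvd [CharZero F] (h₀ : A 0 0 = 2) (h₁ : A 1 1 = 2)
    (hA : A 0 1 * A 1 0 ∉ Set.Icc 0 3) {f : MvPolynomial (Fin 3) F}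
    (hf₀ : cartanSigma A F 0 f = f) (hf₁ : cartanSigma A F 1 f = f) (hf : X 0 ∣ f) : f = 0 :=
  eq_zero_of_dvd_of_forall_not_dvd_iterate (φ := coxeterElement F h₀ h₁)
    (by rw [coxeterElement_apply, hf₁, hf₀]) hf
    (not_X_zero_dvd_iterate_coxeterElement_X_zero hA)

end Reflections

lemma exists_mem_X_dvd_sub_add_mul_X {σ R : Type*} [CommRing R] {i j : σ}
    {B : Subalgebra R (MvPolynomial σ R)} (hX : ∀ k, k ≠ i → k ≠ j → X k ∈ B)
    {s t : MvPolynomial σ R} (hs : s ∈ B) (ht : t ∈ B) (hsq : X i ∣ X j ^ 2 - (s + t * X j))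
    (f : MvPolynomial σ R) : ∃ p ∈ B, ∃ q ∈ B, X i ∣ f - (p + q * X j) := by
  induction f using MvPolynomial.induction_on with
  | C c => exact ⟨C c, B.algebraMap_mem c, 0, zero_mem _, by simp⟩
  | add f g hf hg =>
    obtain ⟨p, hp, q, hq, hf⟩ := hf
    obtain ⟨p', hp', q', hq', hg⟩ := hg
    refine ⟨p + p', add_mem hp hp', q + q', add_mem hq hq', ?_⟩
    convert dvd_add hf hg using 1
    ring
  | mul_X f k hf =>
    obtain ⟨p, hp, q, hq, hf⟩ := hf
    obtain rfl | hki := eq_or_ne k i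
    · exact ⟨0, zero_mem _, 0, zero_mem _, by simp⟩
    obtain rfl | hkj := eq_or_ne k j
    · refine ⟨q * s, mul_mem hq hs, p + q * t, add_mem hp (mul_mem hq ht), ?_⟩
      convert dvd_add (hf.mul_right (X k)) (hsq.mul_left q) using 1
      ring
    · refine ⟨p * X k, mul_mem hp (hX k hki hkj), q * X k, mul_mem hq (hX k hki hkj), ?_⟩
      convert hf.mul_right (X k) using 1
      ring

section Kappa

variable {A : Matrix (Fin 3) (Fin 3) ℤ} {F : Type*} [Field F] [CharZero F]

/-- The polynomial `κ` with coefficients in an arbitrary field of characteristic zero. -/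
noncomputable def kappaOver (A : Matrix (Fin 3) (Fin 3) ℤ) (F : Type*) [Field F] [CharZero F] :
    MvPolynomial (Fin 3) F :=
  map (Rat.castHom F) (kappa A)

lemma kappaOver_rat : kappaOver A ℚ = kappa A := by
  rw [kappaOver, RingHom.ext_rat (Rat.castHom ℚ) (RingHom.id ℚ), MvPolynomial.map_id]

lemma kappaOver_eq :
    kappaOver A F = C (A 0 1 : F) * X 0 ^ 2 + C (A 0 1 : F) * C (A 1 0 : F) * X 0 * X 1 +
      C (A 1 0 : F) * X 1 ^ 2 + C (A 0 1 : F) * C (A 2 0 : F) * X 0 * X 2 +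
      C (A 1 0 : F) * C (A 2 1 : F) * X 1 * X 2 := by
  simp only [kappaOver, kappa, map_intCast, Int.cast_mul, map_add, map_mul, map_pow, map_X]

lemma kappaOver_eq_sub_X_zero_mul_cartanSigma (h₀ : A 0 0 = 2) :
    kappaOver A F = C (A 1 0 : F) * (X 1 ^ 2 + C (A 2 1 : F) * X 2 * X 1) -
      C (A 0 1 : F) * (X 0 * cartanSigma A F 0 (X 0)) := by
  rw [kappaOver_eq, cartanSigma_zero_X_zero h₀]
  ring

lemma kappaOver_eq_sub_X_one_mul_cartanSigma (h₁ : A 1 1 = 2) :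
    kappaOver A F = C (A 0 1 : F) * (X 0 ^ 2 + C (A 2 0 : F) * X 2 * X 0) -
      C (A 1 0 : F) * (X 1 * cartanSigma A F 1 (X 1)) := by
  rw [kappaOver_eq, cartanSigma_one_X_one h₁]
  ring

lemma cartanSigma_zero_kappaOver (h₀ : A 0 0 = 2) :
    cartanSigma A F 0 (kappaOver A F) = kappaOver A F := by
  simp (disch := decide) only [kappaOver_eq_sub_X_zero_mul_cartanSigma h₀, map_sub,
    map_add, map_mul, map_pow, cartanSigma_C, cartanSigma_X_of_ne, cartanSigma_cartanSigma h₀]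
  rw [mul_comm (X 0)]

lemma cartanSigma_one_kappaOver (h₁ : A 1 1 = 2) :
    cartanSigma A F 1 (kappaOver A F) = kappaOver A F := by
  simp (disch := decide) only [kappaOver_eq_sub_X_one_mul_cartanSigma h₁, map_sub,
    map_add, map_mul, map_pow, cartanSigma_C, cartanSigma_X_of_ne, cartanSigma_cartanSigma h₁]
  rw [mul_comm (X 1)]

lemma cartanSigma_kappaOver {j : Fin 3} (hj : j ≠ 2) (hjj : A j j = 2) :
    cartanSigma A F j (kappaOver A F) = kappaOver A F := by
  obtain rfl | rfl : j = 0 ∨ j = 1 := by lia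
  exacts [cartanSigma_zero_kappaOver hjj, cartanSigma_one_kappaOver hjj]

lemma cartanSigma_eq_of_mem_adjoin {j : Fin 3} (hj : j ≠ 2) (hjj : A j j = 2)
    {f : MvPolynomial (Fin 3) F} (hf : f ∈ Algebra.adjoin F {kappaOver A F, X 2}) :
    cartanSigma A F j f = f := by
  have heq : Set.EqOn (cartanSigma A F j) (AlgHom.id F _) {kappaOver A F, X 2} := by
    rintro _ (rfl | rfl)
    exacts [cartanSigma_kappaOver hj hjj, cartanSigma_X_of_ne hj.symm]
  exact AlgHom.adjoin_le_equalizer _ _ heq hf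

lemma X_zero_dvd_X_one_sq_sub (h10 : A 1 0 ≠ 0) :
    X 0 ∣ X 1 ^ 2 - (C (A 1 0 : F)⁻¹ * kappaOver A F + -(C (A 2 1 : F) * X 2) * X 1) := by
  have hinv : C (A 1 0 : F)⁻¹ * C (A 1 0 : F) = (1 : MvPolynomial (Fin 3) F) := by
    rw [← C_mul, inv_mul_cancel₀ (Int.cast_ne_zero.mpr h10), C_1]
  refine ⟨-(C (A 1 0 : F)⁻¹ * C (A 0 1 : F) *
    (X 0 + C (A 1 0 : F) * X 1 + C (A 2 0 : F) * X 2)), ?_⟩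
  rw [kappaOver_eq]
  linear_combination -(X 1 ^ 2 + C (A 2 1 : F) * X 2 * X 1) * hinv

lemma exists_mem_adjoin_X_zero_dvd_sub (h₁ : A 1 1 = 2) (h10 : A 1 0 ≠ 0)
    {f : MvPolynomial (Fin 3) F} (hf : cartanSigma A F 1 f = f) :
    ∃ w ∈ Algebra.adjoin F {kappaOver A F, X 2}, X 0 ∣ f - w := by
  set S := Algebra.adjoin F {kappaOver A F, X 2}
  have hC (c : F) : C c ∈ S := S.algebraMap_mem c
  have hκ : kappaOver A F ∈ S := Algebra.subset_adjoin (by simp)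
  have hX : X 2 ∈ S := Algebra.subset_adjoin (by simp)
  have fix_S {g : MvPolynomial (Fin 3) F} (hg : g ∈ S) : cartanSigma A F 1 g = g :=
    cartanSigma_eq_of_mem_adjoin (by decide) h₁ hg
  obtain ⟨p, hp, q, hq, hdvd⟩ := exists_mem_X_dvd_sub_add_mul_X (i := 0) (j := 1)
    (fun k hk₀ hk₁ ↦ by rwa [show k = 2 by lia]) (mul_mem (hC _) hκ)
    (neg_mem (mul_mem (hC _) hX)) (X_zero_dvd_X_one_sq_sub h10) f
  have hdvd' : X 0 ∣ f - (p + q * cartanSigma A F 1 (X 1)) := by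
    simpa only [map_sub, map_add, map_mul, hf, fix_S hp, fix_S hq,
      cartanSigma_X_of_ne (show (0 : Fin 3) ≠ 1 by decide)] using map_dvd (cartanSigma A F 1) hdvd
  have hsum : X 0 ∣ 2 * f - (2 * p - q * (C (A 2 1 : F) * X 2)) := by
    convert dvd_sub (dvd_add hdvd hdvd') (dvd_mul_right (X 0) (q * C (A 0 1 : F))) using 1
    rw [cartanSigma_one_X_one h₁]
    ring
  have half : C (1 / 2) * 2 = (1 : MvPolynomial (Fin 3) F) := by
    rw [← map_ofNat C 2, ← C_mul, one_div_mul_cancel two_ne_zero, C_1]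
  refine ⟨p - C (1 / 2) * (q * (C (A 2 1 : F) * X 2)),
    sub_mem hp (mul_mem (hC _) (mul_mem hq (mul_mem (hC _) hX))), ?_⟩
  convert hsum.mul_left (C (1 / 2)) using 1
  linear_combination (p - f) * half

end Kappa

theorem P12_eq_adjoin_kappa_omega3_general (A : Matrix (Fin 3) (Fin 3) ℤ) (F : Type*) [Field F]
    [CharZero F] (h₀ : A 0 0 = 2) (h₁ : A 1 1 = 2) (hA : A 0 1 * A 1 0 ∉ Set.Icc 0 3) :
    {q : MvPolynomial (Fin 3) F | cartanSigma A F 0 q = q ∧ cartanSigma A F 1 q = q} =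
      ↑(Algebra.adjoin F {kappaOver A F, X 2}) := by
  have fix₀ {g : MvPolynomial (Fin 3) F} (hg : g ∈ Algebra.adjoin F {kappaOver A F, X 2}) :
      cartanSigma A F 0 g = g :=
    cartanSigma_eq_of_mem_adjoin (by decide) h₀ hg
  have fix₁ {g : MvPolynomial (Fin 3) F} (hg : g ∈ Algebra.adjoin F {kappaOver A F, X 2}) :
      cartanSigma A F 1 g = g :=
    cartanSigma_eq_of_mem_adjoin (by decide) h₁ hg
  refine Set.Subset.antisymm ?_ fun f hf ↦ ⟨fix₀ hf, fix₁ hf⟩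
  rintro f ⟨hf₀, hf₁⟩
  have h10 : A 1 0 ≠ 0 := fun h ↦ hA (by simp [h])
  obtain ⟨w, hw, hdvd⟩ := exists_mem_adjoin_X_zero_dvd_sub h₁ h10 hf₁
  have hfw : f - w = 0 := eq_zero_of_cartanSigma_eq_of_X_zero_dvd h₀ h₁ hA
    (by rw [map_sub, hf₀, fix₀ hw]) (by rw [map_sub, hf₁, fix₁ hw]) hdvd
  rwa [sub_eq_zero.mp hfw]

/-- If `A` is a 3×3 generalized Cartan matrix with `a₁₂ a₂₁ ≥ 4`, then the
subalgebra `P₁₂` of polynomials fixed by both `σ₁` and `σ₂` is the `ℚ`-subalgebra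
generated by `κ` and `ω₃`. -/
theorem P12_eq_adjoin_kappa_omega3 (A : Matrix (Fin 3) (Fin 3) ℤ) (hA : IsGCM A)
    (hinf : 4 ≤ A 0 1 * A 1 0) :
    {q : MvPolynomial (Fin 3) ℚ |
        cartanSigma A ℚ 0 q = q ∧ cartanSigma A ℚ 1 q = q} =
      ↑(Algebra.adjoin ℚ {kappa A, X 2}) := by
  rw [← kappaOver_rat]
  exact P12_eq_adjoin_kappa_omega3_general A ℚ (hA.1 0) (hA.1 1) fun h ↦ by linarith [h.2]
end

section
/- Let A be the 3×3 generalized Cartan matrix with rows (2, −1, −3), (−3, 2, −1), (−2, −4, 2). Over F₂, the subalgebra of F₂[ω₁,ω₂,ω₃] consisting of polynomials fixed by all three automorphisms σ₁, σ₂, σ₃ equals the F₂-subalgebra generated by ω₁² + ω₂² + ω₁ω₂, ω₁ω₂(ω₁+ω₂), and ω₃(ω₁+ω₂+ω₃)(ω₂+ω₃)(ω₁+ω₃). -/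
open MvPolynomial

/-- The Cartan matrix with rows `(2,−1,−3)`, `(−3,2,−1)`, `(−2,−4,2)`. -/
def Amat : Matrix (Fin 3) (Fin 3) ℤ := !![2, -1, -3; -3, 2, -1; -2, -4, 2]

/-!
Modulo 2 the reflections become `σ₁ : ω₁ ↦ ω₁ + ω₂`, `σ₂ : ω₂ ↦ ω₁ + ω₂` and
`σ₃ : ω₃ ↦ ω₁ + ω₂ + ω₃`. An invariant divisible by `ω₃` is divisible by the whole orbit of `ω₃`,
hence by the orbit product `p`. For an invariant `f`, the polynomial `f(ω₁, ω₂, 0)` is again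
invariant, so `f - f(ω₁, ω₂, 0)` is `p` times an invariant of smaller degree, and by descent it
remains to treat the invariants of `σ₁, σ₂` in two variables.

There the same descent works with the product `xy(x + y)` of the orbit of `y`, once the restriction
`f(x, 0)` of an invariant is known to be the restriction of a polynomial in `x² + y² + xy`, that is,
a polynomial in `x²`. Differentiating `f(x + y, y) = f(x, y)` in `y` at `y = 0` gives
`∂f/∂x (x, 0) = 0`, and in characteristic 2 a polynomial with zero derivative is one in `x²`.
-/

section FixedSubalgebra

variable {R A ι : Type*} [CommSemiring R] [Semiring A] [Algebra R A] {s : ι → A →ₐ[R] A}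

/-- The subalgebra of elements fixed by every endomorphism of the family `s`. -/
def fixedSubalgebra (s : ι → A →ₐ[R] A) : Subalgebra R A :=
  ⨅ i, AlgHom.equalizer (s i) (AlgHom.id R A)

lemma mem_fixedSubalgebra {a : A} : a ∈ fixedSubalgebra s ↔ ∀ i, s i a = a := by
  simp [fixedSubalgebra, Algebra.mem_iInf]

lemma mem_fixedSubalgebra_of_mul_mem [IsLeftCancelMulZero A] {a b : A} (ha₀ : a ≠ 0)
    (ha : a ∈ fixedSubalgebra s) (hab : a * b ∈ fixedSubalgebra s) : b ∈ fixedSubalgebra s := by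
  rw [mem_fixedSubalgebra] at ha hab ⊢
  exact fun i => mul_left_cancel₀ ha₀ (by rw [← hab i, map_mul, ha i])

lemma map_dvd_of_mem_fixedSubalgebra {a b : A} (hb : b ∈ fixedSubalgebra s) (i : ι) (h : a ∣ b) :
    s i a ∣ b :=
  mem_fixedSubalgebra.1 hb i ▸ map_dvd (s i) h

end FixedSubalgebra

section Degree

variable {R σ τ : Type*} [CommSemiring R]

lemma totalDegree_aeval_le {n : ℕ} {x : σ → MvPolynomial τ R} (hx : ∀ i, (x i).totalDegree ≤ n)
    (f : MvPolynomial σ R) : (aeval x f).totalDegree ≤ f.totalDegree * n := by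
  rw [aeval_def, eval₂_eq]
  refine totalDegree_finsetSum_le fun m hm => ?_
  calc
    _ ≤ ∑ i ∈ m.support, (x i ^ m i).totalDegree := by
      grw [totalDegree_mul, algebraMap_eq, totalDegree_C, zero_add, totalDegree_finsetProd]
    _ ≤ ∑ i ∈ m.support, m i * n := by
      gcongr with i
      grw [totalDegree_pow, hx i]
    _ ≤ f.totalDegree * n := by
      rw [← Finset.sum_mul]
      gcongr
      exact le_totalDegree hm

lemma totalDegree_polynomial_aeval_le (p : MvPolynomial σ R) (h : Polynomial R) :
    (Polynomial.aeval p h).totalDegree ≤ h.natDegree * p.totalDegree := by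
  rw [Polynomial.aeval_eq_sum_range]
  refine totalDegree_finsetSum_le fun i hi => ?_
  grw [totalDegree_smul_le, totalDegree_pow, Finset.mem_range_succ_iff.1 hi]

end Degree

lemma derivation_aeval {R A M σ : Type*} [CommSemiring R] [CommSemiring A] [Algebra R A]
    [AddCommMonoid M] [Module A M] [Module R M] [Fintype σ] (D : Derivation R A M) (x : σ → A)
    (f : MvPolynomial σ R) : D (aeval x f) = ∑ i, aeval x (pderiv i f) • D (x i) := by
  classical
  induction f using MvPolynomial.induction_on with
  | C a => simp
  | add p q hp hq => simp only [map_add, hp, hq, add_smul, Finset.sum_add_distrib]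
  | mul_X p i hp =>
    simp [hp, pderiv_X, Pi.single_apply, add_smul, mul_smul, Finset.sum_add_distrib,
      Finset.smul_sum, apply_ite (aeval x), ite_smul]

section Divisibility

variable {R σ : Type*} [CommRing R]

lemma dvd_sub_map_of_forall_dvd_X_sub {d : MvPolynomial σ R}
    (φ : MvPolynomial σ R →ₐ[R] MvPolynomial σ R) (h : ∀ i, d ∣ X i - φ (X i))
    (f : MvPolynomial σ R) : d ∣ f - φ f := by
  let π := Ideal.Quotient.mkₐ R (Ideal.span {d})
  have hπ : π = π.comp φ := algHom_ext fun i =>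
    Ideal.Quotient.eq.2 (Ideal.mem_span_singleton.2 (h i))
  exact Ideal.mem_span_singleton.1 (Ideal.Quotient.eq.1 (DFunLike.congr_fun hπ f))

variable [DecidableEq σ]

/-- The substitution `X i ↦ p` that leaves all other variables alone. -/
noncomputable def replaceVar (i : σ) (p : MvPolynomial σ R) :
    MvPolynomial σ R →ₐ[R] MvPolynomial σ R :=
  aeval (Function.update X i p)

@[simp]
lemma replaceVar_X_self (i : σ) (p : MvPolynomial σ R) : replaceVar i p (X i) = p := by
  simp [replaceVar]

@[simp]
lemma replaceVar_X_of_ne {i j : σ} (h : j ≠ i) (p : MvPolynomial σ R) :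
    replaceVar i p (X j) = X j := by
  simp [replaceVar, h]

lemma X_sub_dvd_sub_replaceVar (i : σ) (p f : MvPolynomial σ R) :
    X i - p ∣ f - replaceVar i p f := by
  refine dvd_sub_map_of_forall_dvd_X_sub _ (fun j => ?_) f
  obtain rfl | hj := eq_or_ne j i <;> simp [*]

lemma mul_X_sub_dvd [NoZeroDivisors R] {i : σ} {p a f : MvPolynomial σ R}
    (hp : replaceVar i p p = p) (ha : replaceVar i p a ≠ 0) (haf : a ∣ f) (hf : X i - p ∣ f) :
    a * (X i - p) ∣ f := by
  obtain ⟨g, rfl⟩ := haf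
  have hg : replaceVar i p g = 0 := by simpa [hp, ha] using map_dvd (replaceVar i p) hf
  exact mul_dvd_mul_left a (by simpa [hg] using X_sub_dvd_sub_replaceVar i p g)

lemma totalDegree_replaceVar_zero_le (i : σ) (f : MvPolynomial σ R) :
    (replaceVar i 0 f).totalDegree ≤ f.totalDegree := by
  rw [← mul_one f.totalDegree]
  refine totalDegree_aeval_le (fun j => ?_) f
  obtain rfl | hj := eq_or_ne j i
  · simp
  · rw [Function.update_of_ne hj]
    exact (isHomogeneous_X R j).totalDegree_le

end Divisibility

lemma fixedSubalgebra_le_of_forall_dvd_sub {R σ ι : Type*} [CommRing R] [NoZeroDivisors R]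
    {s : ι → MvPolynomial σ R →ₐ[R] MvPolynomial σ R} {T : Subalgebra R (MvPolynomial σ R)}
    (hT : T ≤ fixedSubalgebra s) {p : MvPolynomial σ R} (hp : p ∈ T) (hp₀ : constantCoeff p = 0)
    (h : ∀ f ∈ fixedSubalgebra s, ∃ u ∈ T, u.totalDegree ≤ f.totalDegree ∧ p ∣ f - u) :
    fixedSubalgebra s ≤ T := by
  intro f hf
  induction hn : f.totalDegree using Nat.strong_induction_on generalizing f with
  | _ n ih =>
    obtain ⟨u, huT, hu, g, hg⟩ := h f hf
    obtain rfl : f = u + p * g := by rw [← hg, add_sub_cancel]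
    by_cases hpg : p * g = 0
    · rwa [hpg, add_zero]
    obtain ⟨hp_ne, hg_ne⟩ := mul_ne_zero_iff.1 hpg
    have hp_deg : p.totalDegree ≠ 0 := fun h_deg => hp_ne <| by
      rw [totalDegree_eq_zero_iff_eq_C.1 h_deg, ← constantCoeff_eq, hp₀, C_0]
    have hg_lt : g.totalDegree < n := by
      have h_sub := totalDegree_sub (u + p * g) u
      rw [add_sub_cancel_left, totalDegree_mul_of_isDomain hp_ne hg_ne] at h_sub
      omega
    have hg_fixed : g ∈ fixedSubalgebra s :=
      mem_fixedSubalgebra_of_mul_mem hp_ne (hT hp) (hg ▸ sub_mem hf (hT huT))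
    exact add_mem huT (mul_mem hp (ih _ hg_lt hg_fixed rfl))

section Generators

variable {A B : Type*} [CommSemiring A] [CommSemiring B]

/-- The invariant of degree 2 of `GL₂(𝔽₂)` in two variables. -/
def dicksonQuadratic (x y : A) : A :=
  x ^ 2 + y ^ 2 + x * y

/-- The invariant of degree 3 of `GL₂(𝔽₂)` in two variables: the product of the nonzero linear
forms over `𝔽₂`. -/
def dicksonCubic (x y : A) : A :=
  x * y * (x + y)

/-- The product of the forms `z + v` over the `𝔽₂`-linear forms `v` in `x` and `y`. -/
def orbitProduct (x y z : A) : A :=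
  z * (x + y + z) * (y + z) * (x + z)

variable {F : Type*} [FunLike F A B] [RingHomClass F A B]

@[simp]
lemma map_dicksonQuadratic (φ : F) (x y : A) :
    φ (dicksonQuadratic x y) = dicksonQuadratic (φ x) (φ y) := by
  simp [dicksonQuadratic]

@[simp]
lemma map_dicksonCubic (φ : F) (x y : A) :
    φ (dicksonCubic x y) = dicksonCubic (φ x) (φ y) := by
  simp [dicksonCubic]

@[simp]
lemma map_orbitProduct (φ : F) (x y z : A) :
    φ (orbitProduct x y z) = orbitProduct (φ x) (φ y) (φ z) := by
  simp [orbitProduct]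

end Generators

section CharTwo

variable {A : Type*} [CommRing A] [CharP A 2]

@[simp]
lemma dicksonQuadratic_add_left (x y : A) :
    dicksonQuadratic (x + y) y = dicksonQuadratic x y := by
  grind [dicksonQuadratic]

@[simp]
lemma dicksonQuadratic_add_right (x y : A) :
    dicksonQuadratic x (x + y) = dicksonQuadratic x y := by
  grind [dicksonQuadratic]

@[simp]
lemma dicksonCubic_add_left (x y : A) : dicksonCubic (x + y) y = dicksonCubic x y := by
  grind [dicksonCubic]

@[simp]
lemma dicksonCubic_add_right (x y : A) : dicksonCubic x (x + y) = dicksonCubic x y := by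
  grind [dicksonCubic]

@[simp]
lemma orbitProduct_add_left (x y z : A) : orbitProduct (x + y) y z = orbitProduct x y z := by
  grind [orbitProduct]

@[simp]
lemma orbitProduct_add_middle (x y z : A) : orbitProduct x (x + y) z = orbitProduct x y z := by
  grind [orbitProduct]

@[simp]
lemma orbitProduct_add_right (x y z : A) :
    orbitProduct x y (x + y + z) = orbitProduct x y z := by
  grind [orbitProduct]

end CharTwo

section TwoVariables

variable {R : Type*} [CommRing R]

variable (R) in
/-- The reflections `x ↦ x + y` (index 0) and `y ↦ x + y` (index 1) of `R[x, y]`; in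
characteristic 2 they generate the action of `GL₂(𝔽₂)`. -/
noncomputable def dicksonSigma :
    Fin 2 → MvPolynomial (Fin 2) R →ₐ[R] MvPolynomial (Fin 2) R :=
  fun i => replaceVar i (X 0 + X 1)

variable (R) in
/-- The subalgebra of `R[x, y]` generated by the Dickson invariants of `GL₂(𝔽₂)`. -/
noncomputable def dicksonAlgebra : Subalgebra R (MvPolynomial (Fin 2) R) :=
  Algebra.adjoin R {dicksonQuadratic (X 0) (X 1), dicksonCubic (X 0) (X 1)}

variable (R) in
/-- The restriction `f ↦ f(x, 0)` of a polynomial in two variables to the line `y = 0`. -/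
noncomputable def restrictAxis : MvPolynomial (Fin 2) R →ₐ[R] Polynomial R :=
  aeval ![Polynomial.X, 0]

lemma natDegree_restrictAxis_le (f : MvPolynomial (Fin 2) R) :
    (restrictAxis R f).natDegree ≤ f.totalDegree := by
  rw [← mul_one f.totalDegree]
  exact aeval_natDegree_le f le_rfl _ (by simp [Fin.forall_fin_two, Polynomial.natDegree_X_le])

lemma X_one_dvd_of_restrictAxis_eq_zero {f : MvPolynomial (Fin 2) R}
    (hf : restrictAxis R f = 0) : X 1 ∣ f := by
  have h := dvd_sub_map_of_forall_dvd_X_sub (d := X 1)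
    ((Polynomial.aeval (X 0)).comp (restrictAxis R)) (by simp [Fin.forall_fin_two, restrictAxis]) f
  simpa [hf] using h

lemma derivative_restrictAxis_eq_zero {f : MvPolynomial (Fin 2) R} (hf : dicksonSigma R 0 f = f) :
    Polynomial.derivative (restrictAxis R f) = 0 := by
  have h_comp : (restrictAxis R).comp (dicksonSigma R 0) = restrictAxis R := by
    ext i
    fin_cases i <;> simp [restrictAxis, dicksonSigma]
  have h_pderiv : pderiv 1 f = dicksonSigma R 0 (pderiv 0 f) + dicksonSigma R 0 (pderiv 1 f) := by
    nth_rw 1 [← hf]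
    simp [dicksonSigma, replaceVar, derivation_aeval, -aeval_eq_bind₁]
  calc
    Polynomial.derivative (restrictAxis R f) = restrictAxis R (pderiv 0 f) := by
      simpa [restrictAxis] using
        derivation_aeval (Polynomial.derivative' (R := R)) ![Polynomial.X, 0] f
    _ = 0 := by
      simpa [← AlgHom.comp_apply, h_comp] using congrArg (restrictAxis R) h_pderiv

lemma restrictAxis_aeval_dicksonQuadratic (h : Polynomial R) :
    restrictAxis R (Polynomial.aeval (dicksonQuadratic (X 0) (X 1)) h) =
      Polynomial.expand R 2 h := by
  rw [← Polynomial.aeval_algHom_apply, Polynomial.expand_eq_comp_X_pow, Polynomial.comp_eq_aeval]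
  simp [restrictAxis, dicksonQuadratic]

lemma totalDegree_aeval_dicksonQuadratic_le (h : Polynomial R) :
    (Polynomial.aeval (dicksonQuadratic (X 0) (X 1) : MvPolynomial (Fin 2) R) h).totalDegree ≤
      h.natDegree * 2 := by
  have h_hom : (dicksonQuadratic (X 0) (X 1) : MvPolynomial (Fin 2) R).IsHomogeneous 2 :=
    ((isHomogeneous_X_pow 0 2).add (isHomogeneous_X_pow 1 2)).add
      ((isHomogeneous_X R 0).mul (isHomogeneous_X R 1))
  grw [totalDegree_polynomial_aeval_le, h_hom.totalDegree_le]

variable [CharP R 2]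

lemma dicksonAlgebra_le_fixedSubalgebra :
    dicksonAlgebra R ≤ fixedSubalgebra (dicksonSigma R) := by
  refine Algebra.adjoin_le ?_
  rintro _ (rfl | rfl) <;> exact mem_fixedSubalgebra.2 (by simp [Fin.forall_fin_two, dicksonSigma])

variable [IsDomain R]

lemma exists_aeval_dicksonQuadratic {f : MvPolynomial (Fin 2) R} (hf : dicksonSigma R 0 f = f) :
    ∃ u ∈ dicksonAlgebra R,
      u.totalDegree ≤ f.totalDegree ∧ restrictAxis R u = restrictAxis R f := by
  let h := Polynomial.contract 2 (restrictAxis R f)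
  have h_expand : Polynomial.expand R 2 h = restrictAxis R f :=
    Polynomial.expand_contract 2 (derivative_restrictAxis_eq_zero hf) two_ne_zero
  refine ⟨Polynomial.aeval (dicksonQuadratic (X 0) (X 1)) h,
    Algebra.adjoin_mono (by simp) (Polynomial.aeval_mem_adjoin_singleton R _), ?_,
    (restrictAxis_aeval_dicksonQuadratic h).trans h_expand⟩
  calc
    _ ≤ h.natDegree * 2 := totalDegree_aeval_dicksonQuadratic_le h
    _ = (restrictAxis R f).natDegree := by rw [← h_expand, Polynomial.natDegree_expand]
    _ ≤ f.totalDegree := natDegree_restrictAxis_le f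

lemma dicksonCubic_dvd {f : MvPolynomial (Fin 2) R} (hf : f ∈ fixedSubalgebra (dicksonSigma R))
    (h : X 1 ∣ f) : dicksonCubic (X 0) (X 1) ∣ f := by
  have h_add : X 0 + X 1 ∣ f := by
    simpa [dicksonSigma] using map_dvd_of_mem_fixedSubalgebra hf 1 h
  have h_zero : X 0 - 0 ∣ f := by
    simpa [dicksonSigma, CharTwo.add_cancel_right] using
      map_dvd_of_mem_fixedSubalgebra hf 0 h_add
  have h_sub : X 1 - X 0 ∣ f := by rwa [CharTwo.sub_eq_add, add_comm]
  have h_mul := mul_X_sub_dvd (by simp) (by simp) h h_sub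
  convert mul_X_sub_dvd (by simp) (by simp) h_mul h_zero using 1
  grind [dicksonCubic]

theorem fixedSubalgebra_dicksonSigma : fixedSubalgebra (dicksonSigma R) = dicksonAlgebra R := by
  refine le_antisymm (fixedSubalgebra_le_of_forall_dvd_sub dicksonAlgebra_le_fixedSubalgebra
    (p := dicksonCubic (X 0) (X 1)) (Algebra.subset_adjoin (by simp)) (by simp [dicksonCubic])
    fun f hf => ?_) dicksonAlgebra_le_fixedSubalgebra
  obtain ⟨u, hu, hu_deg, hu_restrict⟩ :=
    exists_aeval_dicksonQuadratic (mem_fixedSubalgebra.1 hf 0)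
  have h_fixed := sub_mem hf (dicksonAlgebra_le_fixedSubalgebra hu)
  exact ⟨u, hu, hu_deg, dicksonCubic_dvd h_fixed <|
    X_one_dvd_of_restrictAxis_eq_zero (by rw [map_sub, hu_restrict, sub_self])⟩

end TwoVariables

section ThreeVariables

variable {R : Type*} [CommRing R]

variable (R) in
/-- The reductions modulo 2 of the three simple reflections `σ_j`. -/
noncomputable def modTwoSigma : Fin 3 → MvPolynomial (Fin 3) R →ₐ[R] MvPolynomial (Fin 3) R :=
  ![replaceVar 0 (X 0 + X 1), replaceVar 1 (X 0 + X 1), replaceVar 2 (X 0 + X 1 + X 2)]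

variable (R) in
/-- The subalgebra generated by the Dickson invariants in the first two variables and the product
of the orbit of the third variable. -/
noncomputable def dicksonOrbitAlgebra : Subalgebra R (MvPolynomial (Fin 3) R) :=
  Algebra.adjoin R
    {dicksonQuadratic (X 0) (X 1), dicksonCubic (X 0) (X 1), orbitProduct (X 0) (X 1) (X 2)}

lemma aeval_mem_dicksonOrbitAlgebra {g : MvPolynomial (Fin 2) R} (hg : g ∈ dicksonAlgebra R) :
    aeval ![X 0, X 1] g ∈ dicksonOrbitAlgebra R := by
  suffices h : dicksonAlgebra R ≤ (dicksonOrbitAlgebra R).comap (aeval ![X 0, X 1]) from h hg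
  refine Algebra.adjoin_le ?_
  rintro _ (rfl | rfl) <;> exact Algebra.subset_adjoin (by simp)

lemma aeval_mem_fixedSubalgebra_dicksonSigma {f : MvPolynomial (Fin 3) R}
    (hf : f ∈ fixedSubalgebra (modTwoSigma R)) :
    aeval ![X 0, X 1, 0] f ∈ fixedSubalgebra (dicksonSigma R) := by
  let π : MvPolynomial (Fin 3) R →ₐ[R] MvPolynomial (Fin 2) R := aeval ![X 0, X 1, 0]
  refine mem_fixedSubalgebra.2 fun i => ?_
  have h_comp : (dicksonSigma R i).comp π = π.comp (modTwoSigma R i.castSucc) := by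
    ext j
    fin_cases i <;> fin_cases j <;> simp [π, dicksonSigma, modTwoSigma]
  calc
    dicksonSigma R i (π f) = π (modTwoSigma R i.castSucc f) := DFunLike.congr_fun h_comp f
    _ = π f := by rw [mem_fixedSubalgebra.1 hf]

variable [CharP R 2]

lemma dicksonOrbitAlgebra_le_fixedSubalgebra :
    dicksonOrbitAlgebra R ≤ fixedSubalgebra (modTwoSigma R) := by
  refine Algebra.adjoin_le ?_
  rintro _ (rfl | rfl | rfl) <;>
    exact mem_fixedSubalgebra.2 (by simp [Fin.forall_fin_succ, modTwoSigma])

variable [IsDomain R]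

lemma replaceVar_two_zero_mem_dicksonOrbitAlgebra {f : MvPolynomial (Fin 3) R}
    (hf : f ∈ fixedSubalgebra (modTwoSigma R)) : replaceVar 2 0 f ∈ dicksonOrbitAlgebra R := by
  have h_comp : (aeval ![X 0, X 1]).comp (aeval ![X 0, X 1, 0] : _ →ₐ[R] MvPolynomial (Fin 2) R) =
      replaceVar (R := R) (2 : Fin 3) 0 := by
    ext i
    fin_cases i <;> simp
  rw [← h_comp]
  exact aeval_mem_dicksonOrbitAlgebra <|
    fixedSubalgebra_dicksonSigma.le (aeval_mem_fixedSubalgebra_dicksonSigma hf)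

lemma orbitProduct_dvd {f : MvPolynomial (Fin 3) R} (hf : f ∈ fixedSubalgebra (modTwoSigma R))
    (h : X 2 ∣ f) : orbitProduct (X 0) (X 1) (X 2) ∣ f := by
  have h_add : X 0 + X 1 + X 2 ∣ f := by
    simpa [modTwoSigma] using map_dvd_of_mem_fixedSubalgebra hf 2 h
  have h_zero : X 0 + X 2 ∣ f := by
    simpa [modTwoSigma, CharTwo.add_cancel_right] using
      map_dvd_of_mem_fixedSubalgebra hf 0 h_add
  have h_one : X 1 + X 2 ∣ f := by
    simpa [modTwoSigma, CharTwo.add_cancel_left] using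
      map_dvd_of_mem_fixedSubalgebra hf 1 h_add
  rw [add_comm, ← CharTwo.sub_eq_add] at h_add h_zero h_one
  have h_mul := mul_X_sub_dvd (by simp) (by simp [CharTwo.add_eq_zero]) h h_add
  have h_mul' := mul_X_sub_dvd (by simp) (by simp) h_mul h_one
  convert mul_X_sub_dvd (by simp) (by simp [sub_eq_zero]) h_mul' h_zero using 1
  grind [orbitProduct]

theorem fixedSubalgebra_modTwoSigma :
    fixedSubalgebra (modTwoSigma R) = dicksonOrbitAlgebra R := by
  refine le_antisymm (fixedSubalgebra_le_of_forall_dvd_sub dicksonOrbitAlgebra_le_fixedSubalgebra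
    (p := orbitProduct (X 0) (X 1) (X 2)) (Algebra.subset_adjoin (by simp))
    (by simp [orbitProduct]) fun f hf => ?_) dicksonOrbitAlgebra_le_fixedSubalgebra
  have hu := replaceVar_two_zero_mem_dicksonOrbitAlgebra hf
  have h_fixed := sub_mem hf (dicksonOrbitAlgebra_le_fixedSubalgebra hu)
  exact ⟨_, hu, totalDegree_replaceVar_zero_le 2 f,
    orbitProduct_dvd h_fixed (by simpa using X_sub_dvd_sub_replaceVar 2 0 f)⟩

end ThreeVariables

lemma cartanSigma_eq_replaceVar (A : Matrix (Fin 3) (Fin 3) ℤ) (F : Type*) [Field F] (j : Fin 3) :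
    cartanSigma A F j = replaceVar j (X j - cartanAlpha A F j) := by
  ext i
  simp [cartanSigma, replaceVar, Function.update_apply]

lemma cartanSigma_eq_modTwoSigma {F : Type*} [Field F] [CharP F 2]
    {A : Matrix (Fin 3) (Fin 3) ℤ}
    (hA : A.map (Int.cast : ℤ → F) = !![0, 1, 1; 1, 0, 1; 0, 0, 0]) :
    cartanSigma A F = modTwoSigma F := by
  have h_entry (i j) : (A i j : F) = !![0, 1, 1; 1, 0, 1; 0, 0, 0] i j :=
    congrFun (congrFun hA i) j
  have h_alpha : cartanAlpha A F = ![X 1, X 0, X 0 + X 1] := by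
    funext j
    fin_cases j <;> simp [cartanAlpha, h_entry, Fin.sum_univ_three]
  funext j
  rw [cartanSigma_eq_replaceVar, h_alpha, CharTwo.sub_eq_add]
  fin_cases j
  · rfl
  · exact congrArg (replaceVar 1) (add_comm (X 1) (X 0))
  · exact congrArg (replaceVar 2) (add_comm (X 2) (X 0 + X 1))

theorem mod2_P123_eq_adjoin_general {F : Type*} [Field F] [CharP F 2]
    {A : Matrix (Fin 3) (Fin 3) ℤ}
    (hA : A.map (Int.cast : ℤ → F) = !![0, 1, 1; 1, 0, 1; 0, 0, 0]) :
    {q : MvPolynomial (Fin 3) F |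
        cartanSigma A F 0 q = q ∧ cartanSigma A F 1 q = q ∧ cartanSigma A F 2 q = q} =
      ↑(Algebra.adjoin F
        ({X 0 ^ 2 + X 1 ^ 2 + X 0 * X 1, X 0 * X 1 * (X 0 + X 1),
          X 2 * (X 0 + X 1 + X 2) * (X 1 + X 2) * (X 0 + X 2)} :
          Set (MvPolynomial (Fin 3) F))) := by
  change _ = (dicksonOrbitAlgebra F : Set (MvPolynomial (Fin 3) F))
  rw [← fixedSubalgebra_modTwoSigma, ← cartanSigma_eq_modTwoSigma hA]
  ext q
  simp [mem_fixedSubalgebra, Fin.forall_fin_succ]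

/-- For the stated Cartan matrix `A`, the subalgebra of `𝔽₂[ω₁,ω₂,ω₃]` of
polynomials fixed by `σ₁`, `σ₂` and `σ₃` is the `𝔽₂`-subalgebra generated by
`ω₁² + ω₂² + ω₁ω₂`, `ω₁ω₂(ω₁+ω₂)` and `ω₃(ω₁+ω₂+ω₃)(ω₂+ω₃)(ω₁+ω₃)`. -/
theorem mod2_P123_eq_adjoin :
    {q : MvPolynomial (Fin 3) (ZMod 2) |
        cartanSigma Amat (ZMod 2) 0 q = q ∧ cartanSigma Amat (ZMod 2) 1 q = q ∧
          cartanSigma Amat (ZMod 2) 2 q = q} =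
      ↑(Algebra.adjoin (ZMod 2)
        ({X 0 ^ 2 + X 1 ^ 2 + X 0 * X 1, X 0 * X 1 * (X 0 + X 1),
          X 2 * (X 0 + X 1 + X 2) * (X 1 + X 2) * (X 0 + X 2)} :
          Set (MvPolynomial (Fin 3) (ZMod 2)))) :=
  mod2_P123_eq_adjoin_general (by decide)
end
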